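/- (Proportional allocation equilibrium is unique and explicit) Let E>0, g_l>0, flexible loads F = {1,…,n_F} (n_F ≥ 1), inflexible loads I = {n_F+1,…,n}, demands P_{0,i} ≥ 0, κ_i > 0 for i ∈ F, κ̄ = Σ_{i∈F} κ_i, P̄₀ = Σᵢ P_{0,i}, P_max = E²·g_l/4, v(g) = E·g_l/(Σⱼ gⱼ + g_l), ΔPᵢ(g) = v(g)²·gᵢ − P_{0,i}. If g ∈ ℝⁿ_{≥0} satisfies ΔPᵢ(g) = (κᵢ/κ̄)·(P_max − P̄₀) for all i ∈ F and ΔPᵢ(g) = 0 for all i ∈ I, then necessarily Σⱼ gⱼ = g_l, v(g) = E/2, gᵢ = (4/E²)·(P_{0,i} + (κᵢ/κ̄)·(P_max − P̄₀)) for i ∈ F, and gᵢ = (4/E²)·P_{0,i} for i ∈ I. In particular, at most one such g exists. -/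

import Mathlib

/-- Load voltage `v(g) = E·g_l/(Σⱼ gⱼ + g_l)` of the star DC network. -/
noncomputable def loadVoltage (E gl : ℝ) {ι : Type*} [Fintype ι] (g : ι → ℝ) : ℝ :=
  E * gl / ((∑ j, g j) + gl)

/-- Power mismatch `ΔPᵢ(g) = v(g)²·gᵢ − P₀ᵢ` of load `i`. -/
noncomputable def deltaP (E gl : ℝ) {ι : Type*} [Fintype ι] (P0 g : ι → ℝ) (i : ι) : ℝ :=
  (loadVoltage E gl g) ^ 2 * g i - P0 i

/-!
The power delivered to the loads falls short of `P_max` by a perfect square,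
`E² g_l / 4 − v(g)² ∑ⱼ gⱼ = E² g_l / 4 · ((∑ⱼ gⱼ − g_l) / (∑ⱼ gⱼ + g_l))²`.
A proportional allocation makes the mismatches add up to `P_max − P̄₀`, that is, the loads receive
exactly `P_max`, so `∑ⱼ gⱼ = g_l`. Then `v(g) = E / 2`, and each equation for `ΔPᵢ` is linear in
`gᵢ`.
-/

section StarNetwork

variable {ι : Type*} [Fintype ι] {E gl : ℝ} {P0 g : ι → ℝ}

lemma maxPower_sub_loadPower_eq (hden : (∑ j, g j) + gl ≠ 0) :
    E ^ 2 * gl / 4 - loadVoltage E gl g ^ 2 * ∑ j, g j =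
      E ^ 2 * gl / 4 * (((∑ j, g j) - gl) / ((∑ j, g j) + gl)) ^ 2 := by
  rw [loadVoltage]
  field_simp
  ring

lemma sum_eq_of_loadPower_eq_maxPower (hE : E ≠ 0) (hgl : gl ≠ 0) (hden : (∑ j, g j) + gl ≠ 0)
    (hP : loadVoltage E gl g ^ 2 * ∑ j, g j = E ^ 2 * gl / 4) : ∑ j, g j = gl := by
  have hsq := maxPower_sub_loadPower_eq (E := E) hden
  rw [hP, sub_self] at hsq
  simpa [hE, hgl, hden, sub_eq_zero] using hsq.symm

lemma sum_deltaP :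
    ∑ i, deltaP E gl P0 g i = loadVoltage E gl g ^ 2 * ∑ i, g i - ∑ i, P0 i := by
  simp only [deltaP, Finset.sum_sub_distrib, Finset.mul_sum]

lemma loadVoltage_eq_half_of_sum_eq (hgl : gl ≠ 0) (hsum : ∑ j, g j = gl) :
    loadVoltage E gl g = E / 2 := by
  rw [loadVoltage, hsum, ← two_mul, mul_div_mul_right _ _ hgl]

lemma eq_add_deltaP_of_loadVoltage_eq_half (hE : E ≠ 0) (hv : loadVoltage E gl g = E / 2) (i : ι) :
    g i = 4 / E ^ 2 * (P0 i + deltaP E gl P0 g i) := by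
  rw [deltaP, hv]
  field_simp
  ring

end StarNetwork

lemma sum_div_sum_mul {ι K : Type*} [Fintype ι] [Field K] {w : ι → K} (hw : ∑ k, w k ≠ 0) (c : K) :
    ∑ i, w i / (∑ k, w k) * c = c := by
  rw [← Finset.sum_mul, ← Finset.sum_div, div_self hw, one_mul]

theorem stmt_11_general {F I : Type*} [Fintype F] [Fintype I] {E gl : ℝ} (hE : E ≠ 0) (hgl : gl ≠ 0)
    {P0 g : F ⊕ I → ℝ} {κ : F → ℝ} (hκ : ∑ k, κ k ≠ 0) (hden : (∑ j, g j) + gl ≠ 0)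
    (hF : ∀ i, deltaP E gl P0 g (Sum.inl i) =
      (κ i / ∑ k, κ k) * (E ^ 2 * gl / 4 - ∑ j, P0 j))
    (hI : ∀ i, deltaP E gl P0 g (Sum.inr i) = 0) :
    (∑ j, g j) = gl ∧
    loadVoltage E gl g = E / 2 ∧
    (∀ i, g (Sum.inl i) =
      (4 / E ^ 2) * (P0 (Sum.inl i) + (κ i / ∑ k, κ k) * (E ^ 2 * gl / 4 - ∑ j, P0 j))) ∧
    (∀ i, g (Sum.inr i) = (4 / E ^ 2) * P0 (Sum.inr i)) := by
  have hmismatch : ∑ j, deltaP E gl P0 g j = E ^ 2 * gl / 4 - ∑ j, P0 j := by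
    simp only [Fintype.sum_sum_type (deltaP E gl P0 g), hF, hI, Finset.sum_const_zero, add_zero,
      sum_div_sum_mul hκ]
  have hpower : loadVoltage E gl g ^ 2 * ∑ j, g j = E ^ 2 * gl / 4 :=
    sub_left_injective (sum_deltaP.symm.trans hmismatch)
  have hsum : ∑ j, g j = gl := sum_eq_of_loadPower_eq_maxPower hE hgl hden hpower
  have hv : loadVoltage E gl g = E / 2 := loadVoltage_eq_half_of_sum_eq hgl hsum
  refine ⟨hsum, hv, fun i ↦ ?_, fun i ↦ ?_⟩
  · rw [← hF i]
    exact eq_add_deltaP_of_loadVoltage_eq_half hE hv _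
  · simpa only [hI, add_zero] using
      eq_add_deltaP_of_loadVoltage_eq_half (P0 := P0) hE hv (Sum.inr i)

/-- The proportional allocation equilibrium is unique and explicit: if `g ∈ ℝⁿ_{≥0}` satisfies
`ΔPᵢ(g) = (κᵢ/κ̄)·(P_max − P̄₀)` for flexible `i` and `ΔPᵢ(g) = 0` for inflexible `i`, then
`Σⱼ gⱼ = g_l`, `v(g) = E/2`, and `g` is given by the explicit formulas (so at most one such
`g` exists). Flexible loads are indexed via `Sum.inl`, inflexible via `Sum.inr`. -/
theorem stmt_11 (E gl : ℝ) (hE : 0 < E) (hgl : 0 < gl)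
    (nF nI : ℕ) (hnF : 1 ≤ nF)
    (P0 : Fin nF ⊕ Fin nI → ℝ) (hP0 : ∀ i, 0 ≤ P0 i)
    (κ : Fin nF → ℝ) (hκ : ∀ i, 0 < κ i)
    (g : Fin nF ⊕ Fin nI → ℝ) (hg : ∀ i, 0 ≤ g i)
    (hF : ∀ i : Fin nF, deltaP E gl P0 g (Sum.inl i) =
      (κ i / ∑ k, κ k) * (E ^ 2 * gl / 4 - ∑ j, P0 j))
    (hI : ∀ i : Fin nI, deltaP E gl P0 g (Sum.inr i) = 0) :
    (∑ j, g j) = gl ∧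
    loadVoltage E gl g = E / 2 ∧
    (∀ i : Fin nF, g (Sum.inl i) =
      (4 / E ^ 2) * (P0 (Sum.inl i) + (κ i / ∑ k, κ k) * (E ^ 2 * gl / 4 - ∑ j, P0 j))) ∧
    (∀ i : Fin nI, g (Sum.inr i) = (4 / E ^ 2) * P0 (Sum.inr i)) :=
  have hκ_sum : 0 < ∑ k, κ k := Finset.sum_pos (fun i _ ↦ hκ i) ⟨⟨0, hnF⟩, Finset.mem_univ _⟩
  have hden : 0 < (∑ j, g j) + gl := add_pos_of_nonneg_of_pos (Fintype.sum_nonneg hg) hgl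
  stmt_11_general hE.ne' hgl.ne' hκ_sum.ne' hden.ne' hF hI
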